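/- arXiv:1203.6766 — 2 statements merged into one kernel-verified Lean document; each statement's English description precedes it below -/
import Mathlib

section
/- Let N ∈ ℤ_{≥0} and let P : 𝒪_F → E be given by P(z) = Σ_{i∈I_{≤N}} a_i·z^i/i! with a_i ∈ E. Then there exist a constant C ∈ ℝ_{≥1} and n₀ ∈ ℤ_{≥0} such that for every h ≥ n₀ and every m ∈ I_{=N} one has |a_m|·q^{−hN} ≤ C · sup_{z∈ϖ_F^h𝒪_F} |P(z)|. -/
/-!
Setting (cf. the paper's notations): `O` plays the role of the ring of integers `𝒪_F` of a
finite extension `F` of `ℚ_p`, `E` is the coefficient field (a finite extension of `ℚ_p`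
with its p-adic absolute value, normalized by `|x| = p^{-val_F(x)}`, `val_F(p) = [F:ℚ_p]`),
`S` is the (finite) set of `ℚ_p`-algebra embeddings `F ↪ E`, restricted here to `O`,
`ν : O → ℝ` is the absolute value on `O` (the common restriction of the norm of `E` along any
embedding), `ϖ` is a fixed uniformizer with `ν ϖ = q⁻¹` where `q = p^f` is the cardinality
of the residue field, and `u * ϖ ^ e = p` records the ramification index `e`.
-/

open scoped Classical

noncomputable section

namespace CrPaper

structure Setting (S O E : Type*) [Fintype S] [CommRing O] [NormedField E] where
  q : ℝ
  p : ℕ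
  fdeg : ℕ
  hp : p.Prime
  hfdeg : 0 < fdeg
  hq : q = (p : ℝ) ^ fdeg
  emb : S → O →+* E
  emb_inj : ∀ s, Function.Injective (emb s)
  emb_distinct : Function.Injective emb
  ν : O → ℝ
  norm_emb : ∀ (s) (z : O), ‖emb s z‖ = ν z
  norm_le_one : ∀ (s) (z : O), ‖emb s z‖ ≤ 1
  norm_add_max : ∀ x y : E, ‖x + y‖ ≤ max ‖x‖ ‖y‖
  ϖ : O
  ν_ϖ : ν ϖ = q⁻¹
  mem_ball_iff : ∀ (y : O) (n : ℕ), (∃ z, y = ϖ ^ n * z) ↔ ν y ≤ q⁻¹ ^ n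
  ram : ∃ (e : ℕ) (u : O), 0 < e ∧ IsUnit u ∧ u * ϖ ^ e = (p : O)

variable {S O E : Type*} [Fintype S] [DecidableEq S] [CommRing O] [IsDomain O]
  [NormedField E] [CompleteSpace E] [CharZero E]

/-- The total weight `|i| = ∑ i_σ` of a multi-index. -/
def wt (i : S → ℕ) : ℕ := ∑ s, i s

/-- `i! = ∏ i_σ!` for a multi-index. -/
def mfact (i : S → ℕ) : ℕ := ∏ s, (i s).factorial

/-- The (finite) set `I_{≤N}` of multi-indices of total weight `≤ N`. -/
def Idx (S : Type*) [Fintype S] [DecidableEq S] (N : ℕ) : Finset (S → ℕ) :=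
  (Fintype.piFinset fun _ : S => Finset.range (N + 1)).filter fun i => wt i ≤ N

/-- `z^i = ∏_σ σ(z)^{i_σ}`. -/
def mpow (St : Setting S O E) (z : O) (i : S → ℕ) : E := ∏ s, St.emb s z ^ i s

/-- The Taylor remainder `ε_{f,N}(x,y) = f(x+y) − ∑_{|i|≤N} D_i f(x) y^i / i!`. -/
def epsTay (St : Setting S O E) (N : ℕ) (f : O → E) (D : (S → ℕ) → O → E) (x y : O) : E :=
  f (x + y) - ∑ i ∈ Idx S N, D i x * mpow St y i / (mfact i : E)

/-- `f` is of class `C^r` with the family of bounded functions `D` witnessing the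
definition: all `D_i` (`|i| ≤ ⌊r⌋`) are bounded and
`C_{f,r}(h) = sup_{x ∈ O, y ∈ ϖ^h O} |ε_{f,⌊r⌋}(x,y)| q^{rh} → 0` as `h → ∞`. -/
def IsCrWith (St : Setting S O E) (r : ℝ) (f : O → E) (D : (S → ℕ) → O → E) : Prop :=
  (∀ i ∈ Idx S ⌊r⌋₊, ∃ C : ℝ, ∀ x : O, ‖D i x‖ ≤ C) ∧
  ∀ ε : ℝ, 0 < ε → ∃ M : ℕ, ∀ h : ℕ, M ≤ h → ∀ x z : O,
    ‖epsTay St ⌊r⌋₊ f D x (St.ϖ ^ h * z)‖ * St.q ^ (r * (h : ℝ)) ≤ ε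

/-- `f` is of class `C^r`. -/
def IsCr (St : Setting S O E) (r : ℝ) (f : O → E) : Prop :=
  ∃ D, IsCrWith St r f D

/-- The `C^r`-norm of `f` (relative to the — unique — family `D`):
`max( sup_{i,x} |D_i f(x)/i!| , sup_{x,y} |ε_{f,⌊r⌋}(x,y)|/|y|^r )`. -/
def CrNorm (St : Setting S O E) (r : ℝ) (f : O → E) (D : (S → ℕ) → O → E) : ℝ :=
  max (⨆ i : (Idx S ⌊r⌋₊), ⨆ x : O, ‖D i.1 x / (mfact i.1 : E)‖)
      (⨆ x : O, ⨆ y : O, ‖epsTay St ⌊r⌋₊ f D x y‖ / St.ν y ^ r)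

/-- `z ↦ z^i` as a monoid homomorphism. -/
def mpowHom (St : Setting S O E) (i : S → ℕ) : O →* E where
  toFun z := mpow St z i
  map_one' := by simp [mpow]
  map_mul' x y := by simp [mpow, mul_pow, Finset.prod_mul_distrib]

theorem mpowHom_injective (St : Setting S O E) : Function.Injective (mpowHom St) := by
  intro i j hij
  have key : ∀ z, mpow St z i = mpow St z j := fun z => DFunLike.congr_fun hij z
  have hpoly : ∀ x : O, (∏ s, (Polynomial.X + Polynomial.C (St.emb s x)) ^ i s)
      = ∏ s, (Polynomial.X + Polynomial.C (St.emb s x)) ^ j s := by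
    intro x
    apply Polynomial.eq_of_infinite_eval_eq
    apply Set.Infinite.mono (s := Set.range (fun n : ℕ => (n : E)))
    · rintro _ ⟨n, rfl⟩
      have := key ((n : O) + x)
      simpa [mpow, Polynomial.eval_prod] using this
    · exact Set.infinite_range_of_injective Nat.cast_injective
  have hco : ∀ (x : O) (k : S → ℕ),
      (∏ s, (Polynomial.X + Polynomial.C (St.emb s x)) ^ k s).nextCoeff
        = ∑ s, (k s : E) * St.emb s x := by
    intro x k
    rw [Polynomial.Monic.nextCoeff_prod]
    · refine Finset.sum_congr rfl fun s _ => ?_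
      rw [Polynomial.Monic.nextCoeff_pow (Polynomial.monic_X_add_C _),
        Polynomial.nextCoeff_X_add_C, nsmul_eq_mul]
    · intro s _
      exact (Polynomial.monic_X_add_C _).pow _
  have hli : LinearIndependent E (fun s : S => (St.emb s : O → E)) := by
    have h := (linearIndependent_monoidHom O E).comp
      (fun s : S => ((St.emb s : O →+* E) : O →* E)) (by
        intro s t hst
        apply St.emb_distinct
        ext z
        exact DFunLike.congr_fun hst z)
    exact h
  have h0 := Fintype.linearIndependent_iff.1 hli (fun s => (i s : E) - (j s : E)) (by
    funext x
    have := congrArg Polynomial.nextCoeff (hpoly x)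
    rw [hco, hco] at this
    simp [Finset.sum_apply, sub_mul, this])
  funext s
  exact_mod_cast sub_eq_zero.1 (h0 s)

theorem exists_dual (St : Setting S O E) (N : ℕ) (m : Idx S N) :
    ∃ w : O →₀ E, ∀ j : Idx S N, w.sum (fun z c => c * mpow St z j.1) = if j = m then 1 else 0 := by
  have hli : LinearIndependent E (fun (j : Idx S N) (z : O) => mpow St z j.1) :=
    (linearIndependent_monoidHom O E).comp (fun j : Idx S N => mpowHom St j.1)
      ((mpowHom_injective St).comp Subtype.val_injective)
  have hspan := span_flip_eq_top_iff_linearIndependent.2 hli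
  have hm : (Pi.single m 1 : Idx S N → E) ∈
      Submodule.span E (Set.range (flip (fun (j : Idx S N) (z : O) => mpow St z j.1))) := by
    rw [hspan]; trivial
  obtain ⟨w, hw⟩ := Finsupp.mem_span_range_iff_exists_finsupp.1 hm
  refine ⟨w, fun j => ?_⟩
  have := congrFun hw j
  rw [Pi.single_apply] at this
  rw [← this, Finsupp.sum, Finsupp.sum, Finset.sum_apply]
  rfl

/-- for `P(z) = ∑_{i ∈ I_{≤N}} a_i z^i/i!`, there are `C ≥ 1` and `n₀` such that
for all `h ≥ n₀` and every `m ∈ I_{=N}`, `|a_m| q^{−hN} ≤ C · sup_{z ∈ ϖ^h O} |P(z)|`. -/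
theorem statement3 (St : Setting S O E) (N : ℕ) (a : (S → ℕ) → E) :
    ∃ (C : ℝ) (n₀ : ℕ), 1 ≤ C ∧
      ∀ h : ℕ, n₀ ≤ h → ∀ m : S → ℕ, wt m = N →
        ‖a m‖ * St.q ^ (-((h : ℝ) * (N : ℝ))) ≤
          C * ⨆ z : O, ‖∑ j ∈ Idx S N, a j * mpow St (St.ϖ ^ h * z) j / (mfact j : E)‖ := by
  choose w hw using exists_dual St N
  refine ⟨1 + ∑ m, (w m).sum (fun _ c => ‖c‖), 0, ?_, ?_⟩
  · have : 0 ≤ ∑ m, (w m).sum (fun _ c => ‖c‖) :=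
      Finset.sum_nonneg fun m _ => Finset.sum_nonneg fun _ _ => norm_nonneg _
    linarith
  intro h _ m hm
  have hmem : m ∈ Idx S N := by
    simp only [Idx, Finset.mem_filter, Fintype.mem_piFinset, Finset.mem_range]
    refine ⟨fun s => ?_, hm.le⟩
    have : m s ≤ wt m := Finset.single_le_sum (f := m) (fun _ _ => Nat.zero_le _) (Finset.mem_univ s)
    omega
  have hqpos : 0 < St.q := by
    rw [St.hq]
    have := St.hp.pos
    positivity
  set P : O → E := fun z => ∑ j ∈ Idx S N, a j * mpow St (St.ϖ ^ h * z) j / (mfact j : E) with hP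
  have hmp : ∀ z j, mpow St (St.ϖ ^ h * z) j = mpow St (St.ϖ ^ h) j * mpow St z j :=
    fun z j => (mpowHom St j).map_mul _ _
  have hbdd : BddAbove (Set.range fun z => ‖P z‖) := by
    refine ⟨∑ j ∈ Idx S N, ‖a j‖ / ‖(mfact j : E)‖, ?_⟩
    rintro _ ⟨z, rfl⟩
    refine (norm_sum_le _ _).trans (Finset.sum_le_sum fun j _ => ?_)
    rw [norm_div, norm_mul]
    have h1 : ‖mpow St (St.ϖ ^ h * z) j‖ ≤ 1 := by
      rw [mpow, norm_prod]
      refine Finset.prod_le_one (fun _ _ => norm_nonneg _) fun s _ => ?_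
      rw [norm_pow]
      exact pow_le_one₀ (norm_nonneg _) (St.norm_le_one _ _)
    gcongr
    exact mul_le_of_le_one_right (norm_nonneg _) h1
  have hle : ∀ z, ‖P z‖ ≤ ⨆ z, ‖P z‖ := fun z => le_ciSup hbdd z
  have hsup0 : 0 ≤ ⨆ z, ‖P z‖ := (norm_nonneg _).trans (hle 0)
  have hcoef : (w ⟨m, hmem⟩).sum (fun z c => c * P z)
      = a m * mpow St (St.ϖ ^ h) m / (mfact m : E) := by
    have e1 : (w ⟨m, hmem⟩).sum (fun z c => c * P z)
        = ∑ j : Idx S N, a j.1 * mpow St (St.ϖ ^ h) j.1 / (mfact j.1 : E) *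
          (w ⟨m, hmem⟩).sum (fun z c => c * mpow St z j.1) := by
      simp only [Finsupp.sum, Finset.mul_sum]
      rw [Finset.sum_comm]
      refine Finset.sum_congr rfl fun z _ => ?_
      rw [hP]
      simp only
      rw [← Finset.sum_coe_sort, Finset.mul_sum]
      refine Finset.sum_congr rfl fun j _ => ?_
      rw [hmp]
      ring
    rw [e1]
    simp only [hw]
    simp
  have hnorm : ‖mpow St (St.ϖ ^ h) m‖ = St.q ^ (-((h : ℝ) * (N : ℝ))) := by
    have e2 : ∀ s, ‖St.emb s (St.ϖ ^ h) ^ m s‖ = ((St.q⁻¹) ^ h) ^ m s := by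
      intro s
      rw [norm_pow, map_pow, norm_pow, St.norm_emb, St.ν_ϖ]
    rw [mpow, norm_prod, Finset.prod_congr rfl fun s _ => e2 s, Finset.prod_pow_eq_pow_sum]
    have : ∑ s, m s = N := hm
    rw [this, ← pow_mul, Real.rpow_neg hqpos.le, inv_pow]
    congr 1
    rw [← Nat.cast_mul, Real.rpow_natCast]
  have hnat : ∀ n : ℕ, ‖(n : E)‖ ≤ 1 := by
    intro n
    induction n with
    | zero => simp
    | succ k ih =>
      push_cast
      exact (St.norm_add_max _ _).trans (max_le ih (by simp))
  have hfact : 0 < ‖(mfact m : E)‖ := by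
    rw [norm_pos_iff, Nat.cast_ne_zero, mfact, Finset.prod_ne_zero_iff]
    exact fun s _ => Nat.factorial_ne_zero _
  calc ‖a m‖ * St.q ^ (-((h : ℝ) * (N : ℝ)))
      ≤ ‖a m‖ * St.q ^ (-((h : ℝ) * (N : ℝ))) / ‖(mfact m : E)‖ := by
        refine le_div_self ?_ hfact (hnat _)
        positivity
    _ = ‖(w ⟨m, hmem⟩).sum (fun z c => c * P z)‖ := by
        rw [hcoef, norm_div, norm_mul, hnorm]
    _ ≤ (w ⟨m, hmem⟩).sum (fun _ c => ‖c‖) * ⨆ z, ‖P z‖ := by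
        rw [Finsupp.sum, Finsupp.sum, Finset.sum_mul]
        refine (norm_sum_le _ _).trans (Finset.sum_le_sum fun z _ => ?_)
        rw [norm_mul]
        exact mul_le_mul_of_nonneg_left (hle z) (norm_nonneg _)
    _ ≤ (1 + ∑ m, (w m).sum (fun _ c => ‖c‖)) * ⨆ z, ‖P z‖ := by
        refine mul_le_mul_of_nonneg_right ?_ hsup0
        have := Finset.single_le_sum (f := fun m => (w m).sum (fun _ c => ‖c‖))
          (fun m _ => Finset.sum_nonneg fun _ _ => norm_nonneg _) (Finset.mem_univ ⟨m, hmem⟩)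
        linarith

end CrPaper
end
end

section
/- For every f ∈ C^r(𝒪_F,E) and every i ∈ I_{≤[r]}, the function D_i f belongs to C^{r−|i|}(𝒪_F,E); moreover there exists a constant C ∈ ℝ_{≥0}, independent of f, such that ‖D_i f‖_{C^{r−|i|}} ≤ C·‖f‖_{C^r} for all f ∈ C^r(𝒪_F,E) and all i ∈ I_{≤[r]}. In particular, for each i ∈ I_{≤[r]} the map f ↦ D_i f is a continuous linear map from C^r(𝒪_F,E) to C^{r−|i|}(𝒪_F,E). -/
/-!
Setting (cf. the paper's notations): `O` plays the role of the ring of integers `𝒪_F` of a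
finite extension `F` of `ℚ_p`, `E` is the coefficient field (a finite extension of `ℚ_p`
with its p-adic absolute value, normalized by `|x| = p^{-val_F(x)}`, `val_F(p) = [F:ℚ_p]`),
`S` is the (finite) set of `ℚ_p`-algebra embeddings `F ↪ E`, restricted here to `O`,
`ν : O → ℝ` is the absolute value on `O` (the common restriction of the norm of `E` along any
embedding), `ϖ` is a fixed uniformizer with `ν ϖ = q⁻¹` where `q = p^f` is the cardinality
of the residue field, and `u * ϖ ^ e = p` records the ramification index `e`.
-/

open scoped Classical

noncomputable section

namespace CrPaper

variable {S O E : Type*} [Fintype S] [DecidableEq S] [CommRing O] [IsDomain O]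
  [NormedField E] [CompleteSpace E] [CharZero E]

/-- A point separating all the embeddings. -/
theorem exists_sep (St : Setting S O E) :
    ∃ y : O, Function.Injective fun s => St.emb s y := by
  by_contra hcon
  push Not at hcon
  let K : S × S → Submodule ℤ O := fun st =>
    LinearMap.ker (((St.emb st.1 : O →+ E) - (St.emb st.2 : O →+ E)).toIntLinearMap)
  have hK : ∀ st y, y ∈ K st ↔ St.emb st.1 y = St.emb st.2 y := by
    intro st y
    rw [LinearMap.mem_ker]
    change St.emb st.1 y - St.emb st.2 y = 0 ↔ _
    rw [sub_eq_zero]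
  have hcov : ⋃ st ∈ (Finset.univ.filter fun st : S × S => st.1 ≠ st.2), (K st : Set O)
      = Set.univ := by
    ext y
    simp only [Set.mem_iUnion, Set.mem_univ, iff_true]
    have := hcon y
    rw [Function.Injective] at this
    push Not at this
    obtain ⟨a, b, hab, hne⟩ := this
    exact ⟨(a, b), by simpa using hne, (hK _ _).2 hab⟩
  obtain ⟨st, hst, hfi⟩ := Submodule.exists_finiteIndex_of_cover hcov
  have hne : st.1 ≠ st.2 := by simpa using hst
  apply hne
  apply St.emb_distinct
  ext y
  obtain ⟨n, hn0, -, hn⟩ := AddSubgroup.exists_nsmul_mem_of_index_ne_zero hfi.index_ne_zero y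
  have h2 : n • y ∈ K st := hn
  rw [hK] at h2
  simp only [nsmul_eq_mul, map_mul, map_natCast] at h2
  exact mul_left_cancel₀ (Nat.cast_ne_zero.2 hn0.ne') h2

/-- Distinct exponents give distinct monomials. -/
theorem mpow_inj (St : Setting S O E) (i j : S → ℕ) (h : ∀ y, mpow St y i = mpow St y j) :
    i = j := by
  obtain ⟨y, hy⟩ := exists_sep St
  let P : (S → ℕ) → Polynomial E := fun i =>
    ∏ s, (Polynomial.X - Polynomial.C (-(St.emb s y))) ^ i s
  have hP : P i = P j := by
    apply Polynomial.eq_of_infinite_eval_eq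
    apply Set.infinite_of_injective_forall_mem (f := fun n : ℕ => (n : E)) Nat.cast_injective
    intro n
    have := h (n + y)
    simpa [P, Polynomial.eval_prod, mpow] using this
  have hr : ∀ i s, (P i).rootMultiplicity (-(St.emb s y)) = i s := by
    intro i s
    have hX : ∀ t, (Polynomial.X - Polynomial.C (-(St.emb t y))) ≠ 0 :=
      fun t => Polynomial.X_sub_C_ne_zero _
    rw [← Polynomial.count_roots, Polynomial.roots_prod]
    · simp only [Polynomial.roots_pow, Polynomial.roots_X_sub_C, Multiset.count_bind,
        Multiset.count_nsmul]
      rw [Finset.sum_map_val, Finset.sum_eq_single s]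
      · simp
      · intro t _ ht
        rw [Multiset.count_singleton, if_neg, mul_zero]
        intro h
        exact ht (hy (neg_injective h)).symm
      · simp
    · exact Finset.prod_ne_zero_iff.2 fun t _ => pow_ne_zero _ (hX t)
  funext s
  rw [← hr i s, ← hr j s, hP]

theorem mpow_mul (St : Setting S O E) (x y : O) (i : S → ℕ) :
    mpow St (x * y) i = mpow St x i * mpow St y i := (mpowHom St i).map_mul x y

/-- Coefficients of a polynomial function are bounded by the sup of its values. -/
theorem coeff_bound (St : Setting S O E) (J : Finset (S → ℕ)) :
    ∃ c : ℝ, 0 ≤ c ∧ ∀ (a : (S → ℕ) → E) (B : ℝ),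
      (∀ y, ‖∑ i ∈ J, a i * mpow St y i‖ ≤ B) → ∀ i ∈ J, ‖a i‖ ≤ c * B := by
  have hli : LinearIndependent E (fun i : J => (mpowHom St i.1 : O → E)) :=
    (linearIndependent_monoidHom O E).comp (fun i : J => mpowHom St i.1) (by
      intro i j hij
      apply Subtype.ext
      apply mpow_inj St
      intro y
      exact DFunLike.congr_fun hij y)
  let ev : O → (J → E) := fun y i => mpow St y i.1
  have hspan : ∀ v : J → E, v ∈ Submodule.span E (Set.range ev) := by
    intro v
    by_contra hv
    obtain ⟨φ, hφ, hle⟩ := Submodule.exists_le_ker_of_notMem hv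
    have hφe : ∀ w : J → E, φ w = ∑ i, φ (Pi.single i 1) * w i := by
      intro w
      conv_lhs => rw [← Finset.univ_sum_single w]
      rw [map_sum]
      refine Finset.sum_congr rfl fun i _ => ?_
      have : Pi.single i (w i) = (w i) • (Pi.single i 1 : J → E) := by
        rw [← Pi.single_smul]; simp
      rw [this, map_smul, smul_eq_mul, mul_comm]
    rw [Fintype.linearIndependent_iff] at hli
    have h0 := hli (fun i => φ (Pi.single i 1)) (by
      funext y
      have : φ (ev y) = 0 := hle (Submodule.subset_span ⟨y, rfl⟩)
      rw [hφe] at this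
      rw [Finset.sum_apply]
      exact this)
    apply hφ
    rw [hφe]
    simp [h0]
  choose l hl using fun i : J =>
    Finsupp.mem_span_range_iff_exists_finsupp.1 (hspan (Pi.single i 1))
  refine ⟨∑ i, ∑ y ∈ (l i).support, ‖l i y‖, by positivity, ?_⟩
  intro a B hB i hi
  have hB0 : 0 ≤ B := (norm_nonneg _).trans (hB 0)
  have key : a i = ∑ y ∈ (l ⟨i, hi⟩).support, l ⟨i, hi⟩ y * ∑ j ∈ J, a j * mpow St y j := by
    have h1 := congrArg (fun v : J → E => ∑ j, a j.1 * v j) (hl ⟨i, hi⟩)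
    simp only [Finsupp.sum, Finset.sum_apply, Pi.smul_apply, smul_eq_mul] at h1
    have h2 : ∑ j : J, a j.1 * (Pi.single (⟨i, hi⟩ : J) (1 : E) : J → E) j = a i := by
      rw [Finset.sum_eq_single ⟨i, hi⟩]
      · simp
      · intro b _ hb
        simp [hb]
      · simp
    rw [h2] at h1
    rw [← h1]
    simp_rw [Finset.mul_sum]
    rw [Finset.sum_comm]
    refine Finset.sum_congr rfl fun y _ => ?_
    rw [← Finset.sum_coe_sort J]
    refine Finset.sum_congr rfl fun j _ => ?_
    simp only [ev]
    ring
  rw [key]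
  calc _ ≤ ∑ y ∈ (l ⟨i, hi⟩).support, ‖l ⟨i, hi⟩ y‖ * B := by
        refine norm_sum_le_of_le _ fun y _ => ?_
        rw [norm_mul]
        gcongr
        exact hB y
    _ = (∑ y ∈ (l ⟨i, hi⟩).support, ‖l ⟨i, hi⟩ y‖) * B := by rw [Finset.sum_mul]
    _ ≤ _ := by
        gcongr
        exact Finset.single_le_sum (f := fun i => ∑ y ∈ (l i).support, ‖l i y‖)
          (fun _ _ => by positivity) (Finset.mem_univ (⟨i, hi⟩ : J))

theorem mem_Idx {N : ℕ} {i : S → ℕ} : i ∈ Idx S N ↔ wt i ≤ N := by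
  unfold Idx
  simp only [Finset.mem_filter, Fintype.mem_piFinset, Finset.mem_range, and_iff_right_iff_imp]
  intro h s
  have : i s ≤ wt i := Finset.single_le_sum (fun _ _ => Nat.zero_le _) (Finset.mem_univ s)
  omega

theorem wt_add (i j : S → ℕ) : wt (i + j) = wt i + wt j := by
  simp [wt, Finset.sum_add_distrib]

theorem mfact_ne_zero (i : S → ℕ) : (mfact i : E) ≠ 0 :=
  Nat.cast_ne_zero.2 (Finset.prod_ne_zero_iff.2 fun _ _ => Nat.factorial_ne_zero _)

theorem one_binom (a b : E) (n : ℕ) : (a + b) ^ n / (n.factorial : E) =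
    ∑ m ∈ Finset.range (n + 1),
      (b ^ m / (m.factorial : E)) * (a ^ (n - m) / ((n - m).factorial : E)) := by
  rw [add_comm, add_pow, Finset.sum_div]
  refine Finset.sum_congr rfl fun m hm => ?_
  have hm : m ≤ n := by simpa [Nat.lt_succ_iff] using hm
  rw [Nat.cast_choose E hm]
  have h1 : (n.factorial : E) ≠ 0 := Nat.cast_ne_zero.2 (Nat.factorial_ne_zero _)
  field_simp

theorem multi_binom (St : Setting S O E) (y z : O) (i : S → ℕ) :
    mpow St (y + z) i / (mfact i : E) = ∑ j ∈ Fintype.piFinset fun s => Finset.range (i s + 1),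
      (mpow St z j / (mfact j : E)) * (mpow St y (i - j) / (mfact (i - j) : E)) := by
  simp only [mpow, mfact, Nat.cast_prod, ← Finset.prod_div_distrib, map_add, one_binom,
    ← Finset.prod_mul_distrib, Pi.sub_apply]
  rw [Finset.prod_univ_sum]

theorem taylor_reindex (St : Setting S O E) (N : ℕ) (D : (S → ℕ) → O → E) (x y z : O) :
    ∑ i ∈ Idx S N, D i x * mpow St (y + z) i / (mfact i : E) =
    ∑ j ∈ Idx S N, mpow St z j / (mfact j : E) *
      ∑ k ∈ Idx S (N - wt j), D (j + k) x * mpow St y k / (mfact k : E) := by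
  simp_rw [mul_div_assoc, multi_binom, Finset.mul_sum]
  rw [Finset.sum_sigma', Finset.sum_sigma']
  refine Finset.sum_bij' (fun a _ => ⟨a.2, a.1 - a.2⟩) (fun b _ => ⟨b.1 + b.2, b.1⟩) ?_ ?_ ?_ ?_ ?_
  · rintro ⟨i, j⟩ h
    simp only [Finset.mem_sigma, mem_Idx, Fintype.mem_piFinset, Finset.mem_range,
      Nat.lt_succ_iff] at h ⊢
    have hle : j ≤ i := h.2
    have := wt_add j (i - j)
    rw [add_tsub_cancel_of_le hle] at this
    omega
  · rintro ⟨j, k⟩ h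
    simp only [Finset.mem_sigma, mem_Idx, Fintype.mem_piFinset, Finset.mem_range,
      Nat.lt_succ_iff, wt_add] at h ⊢
    exact ⟨by omega, fun s => by simp⟩
  · rintro ⟨i, j⟩ h
    simp only [Finset.mem_sigma, mem_Idx, Fintype.mem_piFinset, Finset.mem_range,
      Nat.lt_succ_iff] at h
    have hle : j ≤ i := h.2
    simp [add_tsub_cancel_of_le hle]
  · rintro ⟨j, k⟩ h
    simp
  · rintro ⟨i, j⟩ h
    simp only [Finset.mem_sigma, mem_Idx, Fintype.mem_piFinset, Finset.mem_range,
      Nat.lt_succ_iff] at h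
    have hle : j ≤ i := h.2
    simp only [add_tsub_cancel_of_le hle]
    ring

/-- The key identity. -/
theorem key_identity (St : Setting S O E) (N : ℕ) (f : O → E) (D : (S → ℕ) → O → E) (x y z : O) :
    ∑ j ∈ Idx S N, mpow St z j / (mfact j : E) *
      epsTay St (N - wt j) (D j) (fun k => D (j + k)) x y =
    epsTay St N f D x (y + z) - epsTay St N f D (x + y) z := by
  unfold epsTay
  rw [taylor_reindex, add_assoc]
  simp_rw [mul_sub, Finset.sum_sub_distrib]
  have : ∀ j, mpow St z j / (mfact j : E) * D j (x + y) =
      D j (x + y) * mpow St z j / (mfact j : E) := fun j => by ring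
  simp_rw [this]
  ring

theorem norm_natCast_le (St : Setting S O E) (n : ℕ) : ‖(n : E)‖ ≤ 1 := by
  induction n with
  | zero => simp
  | succ n ih =>
    rw [Nat.cast_succ]
    exact (St.norm_add_max _ _).trans (max_le ih (by simp))

theorem q_gt (St : Setting S O E) : 1 < St.q := by
  rw [St.hq]
  exact one_lt_pow₀ (by exact_mod_cast St.hp.one_lt) St.hfdeg.ne'

theorem norm_mpow (St : Setting S O E) (z : O) (i : S → ℕ) : ‖mpow St z i‖ = St.ν z ^ wt i := by
  unfold mpow wt
  rw [norm_prod, ← Finset.prod_pow_eq_pow_sum]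
  exact Finset.prod_congr rfl fun s _ => by rw [norm_pow, St.norm_emb]

theorem norm_mpow_pi (St : Setting S O E) (h : ℕ) (i : S → ℕ) :
    ‖mpow St (St.ϖ ^ h) i‖ = (St.q ^ (h * wt i))⁻¹ := by
  have : mpow St (St.ϖ ^ h) i = mpow St St.ϖ i ^ h := (mpowHom St i).map_pow _ _
  rw [this, norm_pow, norm_mpow, St.ν_ϖ, inv_pow, inv_pow, ← pow_mul, mul_comm]

theorem norm_mpow_le (St : Setting S O E) (z : O) (i : S → ℕ) : ‖mpow St z i‖ ≤ 1 := by
  unfold mpow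
  rw [norm_prod]
  refine Finset.prod_le_one (fun _ _ => norm_nonneg _) fun s _ => ?_
  rw [norm_pow]
  exact pow_le_one₀ (norm_nonneg _) (St.norm_le_one s z)

/-- Main estimate: the remainder of `D_j` at scale `h` is controlled by that of `f`. -/
theorem main_estimate (St : Setting S O E) (N : ℕ) :
    ∃ c : ℝ, 0 ≤ c ∧ ∀ (f : O → E) (D : (S → ℕ) → O → E) (B : ℝ) (h : ℕ),
      (∀ x z, ‖epsTay St N f D x (St.ϖ ^ h * z)‖ ≤ B) → ∀ j ∈ Idx S N, ∀ x y,
        ‖epsTay St (N - wt j) (D j) (fun k => D (j + k)) x (St.ϖ ^ h * y)‖ ≤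
          c * B * St.q ^ (h * wt j) := by
  obtain ⟨c, hc, hcb⟩ := coeff_bound St (Idx S N)
  refine ⟨c * 2, by positivity, ?_⟩
  intro f D B h hB j hj x y
  have hq := q_gt St
  have hq0 : 0 < St.q := by linarith
  have := hcb (fun j => mpow St (St.ϖ ^ h) j / (mfact j : E) *
      epsTay St (N - wt j) (D j) (fun k => D (j + k)) x (St.ϖ ^ h * y)) (2 * B) (by
    intro z
    have hk := key_identity St N f D x (St.ϖ ^ h * y) (St.ϖ ^ h * z)
    have e : ∑ i ∈ Idx S N, mpow St (St.ϖ ^ h) i / (mfact i : E) *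
      epsTay St (N - wt i) (D i) (fun k => D (i + k)) x (St.ϖ ^ h * y) * mpow St z i =
      ∑ j ∈ Idx S N, mpow St (St.ϖ ^ h * z) j / (mfact j : E) *
      epsTay St (N - wt j) (D j) (fun k => D (j + k)) x (St.ϖ ^ h * y) := by
      refine Finset.sum_congr rfl fun i _ => ?_
      rw [mpow_mul]; ring
    rw [e, hk, ← mul_add]
    calc _ ≤ _ := norm_sub_le _ _
      _ ≤ B + B := add_le_add (hB _ _) (hB _ _)
      _ = _ := by ring) j hj
  rw [norm_mul, norm_div, norm_mpow_pi] at this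
  set T := ‖epsTay St (N - wt j) (D j) (fun k => D (j + k)) x (St.ϖ ^ h * y)‖ with hT
  have hf1 : ‖(mfact j : E)‖ ≤ 1 := norm_natCast_le St _
  have hf0 : 0 < ‖(mfact j : E)‖ := norm_pos_iff.2 (mfact_ne_zero j)
  have hqp : 0 < St.q ^ (h * wt j) := by positivity
  have h3 : (St.q ^ (h * wt j))⁻¹ * T ≤ c * (2 * B) := by
    refine le_trans ?_ this
    gcongr
    rw [le_div_iff₀ hf0]
    exact mul_le_of_le_one_right (by positivity) hf1
  rw [inv_mul_le_iff₀ hqp] at h3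
  linarith

/-- At `y = 0` the remainder vanishes. -/
theorem eps_zero (St : Setting S O E) {r : ℝ} (hr : 0 ≤ r) {f : O → E} {D : (S → ℕ) → O → E}
    (hf : IsCrWith St r f D) (x : O) : epsTay St ⌊r⌋₊ f D x 0 = 0 := by
  rw [← norm_le_zero_iff]
  refine le_of_forall_pos_le_add fun ε hε => ?_
  obtain ⟨M, hM⟩ := hf.2 ε hε
  have := hM M le_rfl x 0
  rw [mul_zero] at this
  have h1 : 1 ≤ St.q ^ (r * (M : ℝ)) := Real.one_le_rpow (q_gt St).le (by positivity)
  nlinarith [norm_nonneg (epsTay St ⌊r⌋₊ f D x 0)]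

/-- The Taylor remainder is bounded. -/
theorem eps_bdd (St : Setting S O E) {r : ℝ} (hr : 0 ≤ r) {f : O → E} {D : (S → ℕ) → O → E}
    (hf : IsCrWith St r f D) : ∃ K : ℝ, 0 ≤ K ∧ ∀ x y, ‖epsTay St ⌊r⌋₊ f D x y‖ ≤ K := by
  choose! K hK using hf.1
  set L := ∑ i ∈ Idx S ⌊r⌋₊, K i / ‖(mfact i : E)‖ with hL
  have hT : ∀ x y : O,
      ‖∑ i ∈ Idx S ⌊r⌋₊, D i x * mpow St y i / (mfact i : E)‖ ≤ L := by
    intro x y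
    refine norm_sum_le_of_le _ fun i hi => ?_
    rw [norm_div, norm_mul]
    gcongr
    calc _ ≤ ‖D i x‖ * 1 := by
          gcongr
          exact norm_mpow_le St y i
      _ ≤ _ := by rw [mul_one]; exact hK i hi x
  have hfb : ∀ x, ‖f x‖ ≤ L := by
    intro x
    have h0 := eps_zero St hr hf x
    unfold epsTay at h0
    rw [add_zero, sub_eq_zero] at h0
    rw [h0]
    exact hT x 0
  refine ⟨L + L, ?_, ?_⟩
  · have := (norm_nonneg _).trans (hfb 0)
    linarith
  · intro x y
    exact (norm_sub_le _ _).trans (add_le_add (hfb _) (hT _ _))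

theorem nu_nonneg (St : Setting S O E) [Nonempty S] (y : O) : 0 ≤ St.ν y := by
  rw [← St.norm_emb (Classical.arbitrary S) y]; exact norm_nonneg _

theorem nu_le_one (St : Setting S O E) [Nonempty S] (y : O) : St.ν y ≤ 1 := by
  rw [← St.norm_emb (Classical.arbitrary S) y]; exact St.norm_le_one _ _

theorem nu_zero (St : Setting S O E) [Nonempty S] : St.ν 0 = 0 := by
  rw [← St.norm_emb (Classical.arbitrary S) 0]; simp

theorem nu_pos (St : Setting S O E) [Nonempty S] {y : O} (hy : y ≠ 0) : 0 < St.ν y := by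
  rw [← St.norm_emb (Classical.arbitrary S) y, norm_pos_iff]
  exact (map_ne_zero_iff _ (St.emb_inj _)).2 hy

/-- Every nonzero `y` lies in a ball `ϖ^h O` of comparable radius. -/
theorem exists_scale (St : Setting S O E) [Nonempty S] {y : O} (hy : y ≠ 0) :
    ∃ (h : ℕ) (z : O), y = St.ϖ ^ h * z ∧ (St.q⁻¹) ^ (h + 1) < St.ν y := by
  have hq := q_gt St
  obtain ⟨h, h1, h2⟩ := exists_nat_pow_near_of_lt_one (nu_pos St hy) (nu_le_one St y)
    (inv_pos.2 (by linarith : 0 < St.q)) (inv_lt_one_of_one_lt₀ hq)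
  obtain ⟨z, hz⟩ := (St.mem_ball_iff y h).2 h2
  exact ⟨h, z, hz, h1⟩

/-- From a bound `q^{-rh}` at scale `h` to a bound by `|y|^r`. -/
theorem scale_bound (St : Setting S O E) [Nonempty S] {r : ℝ} (hr : 0 ≤ r) {y : O} {h : ℕ}
    (hy : (St.q⁻¹) ^ (h + 1) < St.ν y) :
    St.q ^ (-(r * (h : ℝ))) ≤ St.q ^ r * St.ν y ^ r := by
  have hq := q_gt St
  have hq0 : 0 < St.q := by linarith
  have h1 : ((St.q⁻¹) ^ (h + 1)) ^ r ≤ St.ν y ^ r :=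
    Real.rpow_le_rpow (by positivity) hy.le hr
  have h2 : ((St.q⁻¹) ^ (h + 1)) ^ r = St.q ^ (-(r * ((h : ℝ) + 1))) := by
    rw [inv_pow, ← Real.rpow_natCast, ← Real.rpow_neg hq0.le, ← Real.rpow_mul hq0.le]
    congr 1
    push_cast
    ring
  calc St.q ^ (-(r * (h : ℝ))) = St.q ^ r * St.q ^ (-(r * ((h : ℝ) + 1))) := by
        rw [← Real.rpow_add hq0]; congr 1; ring
    _ ≤ _ := by rw [← h2]; gcongr

theorem eps_div_bdd (St : Setting S O E) [Nonempty S] {r : ℝ} (hr : 0 ≤ r) {f : O → E}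
    {D : (S → ℕ) → O → E} (hf : IsCrWith St r f D) :
    ∃ K : ℝ, ∀ x y, ‖epsTay St ⌊r⌋₊ f D x y‖ / St.ν y ^ r ≤ K := by
  obtain ⟨K, hK0, hK⟩ := eps_bdd St hr hf
  obtain ⟨M, hM⟩ := hf.2 1 one_pos
  have hq := q_gt St
  have hq0 : 0 < St.q := by linarith
  have hqM : 0 < St.q ^ (r * (M : ℝ)) := by positivity
  refine ⟨(1 + K * St.q ^ (r * (M : ℝ))) * St.q ^ r, ?_⟩
  intro x y
  by_cases hy : y = 0
  · rw [hy, eps_zero St hr hf, norm_zero, zero_div]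
    positivity
  have hνr : 0 < St.ν y ^ r := Real.rpow_pos_of_pos (nu_pos St hy) r
  rw [div_le_iff₀ hνr]
  obtain ⟨h, z, hyz, hh⟩ := exists_scale St hy
  have hsb := scale_bound St hr hh
  have hc1 : St.q ^ (-(r * (h : ℝ))) * St.q ^ (r * (h : ℝ)) = 1 := by
    rw [← Real.rpow_add hq0]; simp
  have hqh : 0 < St.q ^ (r * (h : ℝ)) := by positivity
  have hqh' : 0 < St.q ^ (-(r * (h : ℝ))) := by positivity
  have main : ‖epsTay St ⌊r⌋₊ f D x y‖ ≤
      (1 + K * St.q ^ (r * (M : ℝ))) * St.q ^ (-(r * (h : ℝ))) := by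
    by_cases hMh : M ≤ h
    · have h1 := hM h hMh x z
      rw [← hyz] at h1
      calc ‖epsTay St ⌊r⌋₊ f D x y‖
          = ‖epsTay St ⌊r⌋₊ f D x y‖ * St.q ^ (r * (h : ℝ)) * St.q ^ (-(r * (h : ℝ))) := by
            rw [mul_assoc, mul_comm (St.q ^ (r * (h : ℝ))), hc1, mul_one]
        _ ≤ 1 * St.q ^ (-(r * (h : ℝ))) := by gcongr
        _ ≤ _ := by
            gcongr
            have : 0 ≤ K * St.q ^ (r * (M : ℝ)) := by positivity
            linarith
    · have hle : (h : ℝ) ≤ M := by exact_mod_cast (not_le.1 hMh).le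
      have h2 : 1 ≤ St.q ^ (r * (M : ℝ)) * St.q ^ (-(r * (h : ℝ))) := by
        rw [← Real.rpow_add hq0]
        apply Real.one_le_rpow hq.le
        nlinarith
      have h3 := hK x y
      calc _ ≤ K * 1 := by linarith
        _ ≤ K * (St.q ^ (r * (M : ℝ)) * St.q ^ (-(r * (h : ℝ)))) := by gcongr
        _ ≤ _ := by nlinarith
  refine main.trans ?_
  rw [mul_assoc]
  gcongr

theorem eps_le_norm (St : Setting S O E) [Nonempty S] {r : ℝ} (hr : 0 ≤ r) {f : O → E}
    {D : (S → ℕ) → O → E} (hf : IsCrWith St r f D) (x y : O) :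
    ‖epsTay St ⌊r⌋₊ f D x y‖ ≤ CrNorm St r f D * St.ν y ^ r := by
  by_cases hy : y = 0
  · rw [hy, nu_zero, eps_zero St hr hf, norm_zero]
    refine mul_nonneg ?_ (Real.rpow_nonneg le_rfl r)
    refine le_max_of_le_right (Real.iSup_nonneg fun x => Real.iSup_nonneg fun y => ?_)
    exact div_nonneg (norm_nonneg _) (Real.rpow_nonneg (nu_nonneg St y) r)
  have hνr : 0 < St.ν y ^ r := Real.rpow_pos_of_pos (nu_pos St hy) r
  rw [← div_le_iff₀ hνr]
  obtain ⟨K, hK⟩ := eps_div_bdd St hr hf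
  refine le_max_of_le_right ?_
  refine le_ciSup_of_le (f := fun x => ⨆ y : O, ‖epsTay St ⌊r⌋₊ f D x y‖ / St.ν y ^ r) ?_ x ?_
  · refine ⟨K, ?_⟩
    rintro _ ⟨x, rfl⟩
    exact ciSup_le fun y => hK x y
  · refine le_ciSup (f := fun y => ‖epsTay St ⌊r⌋₊ f D x y‖ / St.ν y ^ r) ?_ y
    refine ⟨K, ?_⟩
    rintro _ ⟨y, rfl⟩
    exact hK x y

theorem D_le_norm (St : Setting S O E) {r : ℝ} {f : O → E}
    {D : (S → ℕ) → O → E} (hf : IsCrWith St r f D) {i : S → ℕ} (hi : i ∈ Idx S ⌊r⌋₊) (x : O) :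
    ‖D i x / (mfact i : E)‖ ≤ CrNorm St r f D := by
  obtain ⟨K, hK⟩ := hf.1 i hi
  refine le_max_of_le_left ?_
  refine le_ciSup_of_le (f := fun i : (Idx S ⌊r⌋₊) => ⨆ x : O, ‖D i.1 x / (mfact i.1 : E)‖)
    (Set.finite_range _).bddAbove ⟨i, hi⟩ ?_
  refine le_ciSup (f := fun x => ‖D i x / (mfact i : E)‖) ?_ x
  refine ⟨K / ‖(mfact i : E)‖, ?_⟩
  rintro _ ⟨x, rfl⟩
  simp only [norm_div]
  gcongr
  exact hK x

theorem mfact_dvd (i k : S → ℕ) : mfact k ∣ mfact (i + k) :=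
  Finset.prod_dvd_prod_of_dvd _ _ fun s _ => Nat.factorial_dvd_factorial (by simp)

theorem statement4_empty (St : Setting S O E) [IsEmpty S] (r : ℝ) (hr : 0 ≤ r)
    (f : O → E) (D : (S → ℕ) → O → E) (hf : IsCrWith St r f D) (i : S → ℕ) :
    IsCrWith St (r - (wt i : ℝ)) (D i) D ∧
      CrNorm St (r - (wt i : ℝ)) (D i) D ≤ 1 * CrNorm St r f D := by
  have hw : wt i = 0 := by simp [wt]
  have hI : Idx S ⌊r⌋₊ = {i} := by
    ext j
    rw [mem_Idx]
    simp [wt, Subsingleton.elim j i]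
  have hfD : f = D i := by
    funext x
    have h0 := eps_zero St hr hf x
    unfold epsTay at h0
    rw [hI] at h0
    simpa [mpow, mfact, sub_eq_zero] using h0
  rw [hw, Nat.cast_zero, sub_zero, ← hfD, one_mul]
  exact ⟨hf, le_rfl⟩

/-- for `f ∈ C^r` and `i ∈ I_{≤[r]}`, `D_i f ∈ C^{r−|i|}`, and there is a constant
`C ≥ 0`, independent of `f`, with `‖D_i f‖_{C^{r−|i|}} ≤ C ‖f‖_{C^r}`; in particular
`f ↦ D_i f` is continuous from `C^r` to `C^{r−|i|}`. -/
theorem statement4 (St : Setting S O E) (r : ℝ) (hr : 0 ≤ r) :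
    ∃ C : ℝ, 0 ≤ C ∧
      ∀ (f : O → E) (D : (S → ℕ) → O → E), IsCrWith St r f D →
        ∀ i ∈ Idx S ⌊r⌋₊, ∃ D' : (S → ℕ) → O → E,
          IsCrWith St (r - (wt i : ℝ)) (D i) D' ∧
          CrNorm St (r - (wt i : ℝ)) (D i) D' ≤ C * CrNorm St r f D := by
  rcases isEmpty_or_nonempty S with hS | hS
  · exact ⟨1, zero_le_one, fun f D hf i _ => ⟨D, statement4_empty St r hr f D hf i⟩⟩
  have hq := q_gt St
  have hq0 : 0 < St.q := by linarith
  obtain ⟨c, hc, hmain⟩ := main_estimate St ⌊r⌋₊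
  have hqr : 1 ≤ St.q ^ r := Real.one_le_rpow hq.le hr
  refine ⟨1 + c * St.q ^ r, by positivity, ?_⟩
  intro f D hf i hi
  have hwi : wt i ≤ ⌊r⌋₊ := mem_Idx.1 hi
  have hwr : (wt i : ℝ) ≤ r := (Nat.le_floor_iff hr).1 hwi
  have hr' : 0 ≤ r - (wt i : ℝ) := by linarith
  have hfl : ⌊r - (wt i : ℝ)⌋₊ = ⌊r⌋₊ - wt i := Nat.floor_sub_natCast r (wt i)
  have hmem : ∀ k ∈ Idx S (⌊r⌋₊ - wt i), i + k ∈ Idx S ⌊r⌋₊ := by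
    intro k hk
    rw [mem_Idx] at hk ⊢
    rw [wt_add]
    omega
  have hexp : ∀ h : ℕ, St.q ^ (h * wt i) = St.q ^ ((wt i : ℝ) * (h : ℝ)) := by
    intro h
    rw [← Real.rpow_natCast]
    congr 1
    push_cast
    ring
  refine ⟨fun k => D (i + k), ⟨?_, ?_⟩, ?_⟩
  · rw [hfl]
    intro k hk
    exact hf.1 _ (hmem k hk)
  · rw [hfl]
    intro ε hε
    obtain ⟨M, hM⟩ := hf.2 (ε / (c + 1)) (by positivity)
    refine ⟨M, fun h hh x z => ?_⟩
    have h1 := hmain f D (ε / (c + 1) * St.q ^ (-(r * (h : ℝ)))) h (by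
      intro x z
      have := hM h hh x z
      rw [Real.rpow_neg hq0.le, ← div_eq_mul_inv, le_div_iff₀ (by positivity)]
      exact this) i hi x z
    calc _ ≤ c * (ε / (c + 1) * St.q ^ (-(r * (h : ℝ)))) * St.q ^ (h * wt i) *
          St.q ^ ((r - (wt i : ℝ)) * (h : ℝ)) := by gcongr
      _ = c * (ε / (c + 1)) * (St.q ^ (-(r * (h : ℝ))) * St.q ^ ((wt i : ℝ) * (h : ℝ)) *
          St.q ^ ((r - (wt i : ℝ)) * (h : ℝ))) := by rw [hexp]; ring
      _ = c * (ε / (c + 1)) := by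
          rw [← Real.rpow_add hq0, ← Real.rpow_add hq0]
          ring_nf
          simp
      _ ≤ (c + 1) * (ε / (c + 1)) := by gcongr; linarith
      _ = ε := by field_simp
  · have hN0 : 0 ≤ CrNorm St r f D := (norm_nonneg _).trans (D_le_norm St hf hi 0)
    have hCN : 0 ≤ (1 + c * St.q ^ r) * CrNorm St r f D := by positivity
    have hcq : 0 ≤ c * St.q ^ r := by positivity
    refine max_le ?_ ?_
    · refine Real.iSup_le (fun k => Real.iSup_le (fun x => ?_) hCN) hCN
      have hk : k.1 ∈ Idx S (⌊r⌋₊ - wt i) := hfl ▸ k.2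
      have h1 := D_le_norm St hf (hmem _ hk) x
      obtain ⟨m, hm⟩ := mfact_dvd i k.1
      have h2 : D (i + k.1) x / (mfact k.1 : E) =
          D (i + k.1) x / (mfact (i + k.1) : E) * (m : E) := by
        have e1 : (mfact (i + k.1) : E) ≠ 0 := mfact_ne_zero _
        have e2 : (mfact k.1 : E) ≠ 0 := mfact_ne_zero _
        have e3 : (mfact (i + k.1) : E) = (mfact k.1 : E) * (m : E) := by
          rw [hm]; push_cast; ring
        have e4 : (m : E) ≠ 0 := by
          intro h0
          rw [h0, mul_zero] at e3
          exact e1 e3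
        rw [e3]
        field_simp
      rw [h2, norm_mul]
      calc _ ≤ CrNorm St r f D * 1 := by
            gcongr
            exact norm_natCast_le St m
        _ ≤ _ := by nlinarith
    · refine Real.iSup_le (fun x => Real.iSup_le (fun y => ?_) hCN) hCN
      rw [hfl]
      -- the bound at every scale
      have hscale : ∀ (h : ℕ) (z : O),
          ‖epsTay St (⌊r⌋₊ - wt i) (D i) (fun k => D (i + k)) x (St.ϖ ^ h * z)‖ ≤
          c * CrNorm St r f D * St.q ^ (-((r - (wt i : ℝ)) * (h : ℝ))) := by
        intro h z
        have h1 := hmain f D (CrNorm St r f D * St.q ^ (-(r * (h : ℝ)))) h (by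
          intro x z
          refine (eps_le_norm St hr hf x _).trans ?_
          gcongr
          have h2 := (St.mem_ball_iff (St.ϖ ^ h * z) h).1 ⟨z, rfl⟩
          calc _ ≤ ((St.q⁻¹) ^ h) ^ r := Real.rpow_le_rpow (nu_nonneg St _) h2 hr
            _ = _ := by
              rw [inv_pow, ← Real.rpow_natCast, ← Real.rpow_neg hq0.le, ← Real.rpow_mul hq0.le]
              congr 1
              ring) i hi x z
        refine h1.trans (le_of_eq ?_)
        rw [hexp, ← mul_assoc, mul_assoc (c * CrNorm St r f D), ← Real.rpow_add hq0]
        congr 2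
        ring
      have hqr2 : St.q ^ (r - (wt i : ℝ)) ≤ St.q ^ r :=
        Real.rpow_le_rpow_of_exponent_le hq.le (by simp)
      by_cases hy : y = 0
      · rcases hr'.eq_or_lt with h0 | h0
        · have h1 := hscale 0 y
          rw [pow_zero, one_mul] at h1
          rw [← h0, Real.rpow_zero, div_one]
          simp only [Nat.cast_zero, mul_zero, neg_zero, Real.rpow_zero, mul_one] at h1
          refine h1.trans ?_
          gcongr
          nlinarith
        · rw [hy, nu_zero, Real.zero_rpow h0.ne', div_zero]
          exact hCN
      · obtain ⟨h, z, hyz, hh⟩ := exists_scale St hy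
        have hνr : 0 < St.ν y ^ (r - (wt i : ℝ)) := Real.rpow_pos_of_pos (nu_pos St hy) _
        rw [div_le_iff₀ hνr]
        have h1 := hscale h z
        rw [← hyz] at h1
        calc _ ≤ _ := h1
          _ ≤ c * CrNorm St r f D * (St.q ^ (r - (wt i : ℝ)) * St.ν y ^ (r - (wt i : ℝ))) := by
              gcongr
              exact scale_bound St hr' hh
          _ ≤ c * CrNorm St r f D * (St.q ^ r * St.ν y ^ (r - (wt i : ℝ))) := by gcongr
          _ = (c * St.q ^ r) * CrNorm St r f D * St.ν y ^ (r - (wt i : ℝ)) := by ring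
          _ ≤ _ := by
              gcongr
              linarith

end CrPaper
end
end
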